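/- At the critical parameter γ = √(2d), the standard Gaussian multiplicative chaos vanishes: for every bounded Borel set A ⊂ ℝ^d, almost surely M_t^{√(2d)}(A) = ∫_A e^{√(2d)·X_t(x) − d·t} dx → 0 as t → ∞. -/

import Mathlib

open MeasureTheory ProbabilityTheory Filter

noncomputable section

/-- The chaos density at a point. -/
def gZ {d : ℕ} {Ω : Type*} (g : ℝ) (Y : ℝ → EuclideanSpace ℝ (Fin d) → Ω → ℝ)
    (t : ℝ) (x : EuclideanSpace ℝ (Fin d)) (ω : Ω) : ENNReal :=
  ENNReal.ofReal (Real.exp (g * Y t x ω - (d:ℝ) * t))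

/-- The facts about the field which are used in the main argument. -/
structure GCore {d : ℕ} {Ω : Type*} [m0 : MeasurableSpace Ω] (P : Measure Ω)
    (F : ℝ → MeasurableSpace Ω) (g C : ℝ)
    (Y : ℝ → EuclideanSpace ℝ (Fin d) → Ω → ℝ) : Prop where
  hg : g ^ 2 = 2 * (d:ℝ)
  gpos : 0 < g
  le : ∀ t, F t ≤ m0
  mono : ∀ s t, s ≤ t → F s ≤ F t
  meas : ∀ t, 0 ≤ t → @Measurable _ _ (@Prod.instMeasurableSpace _ _ inferInstance (F t)) _
    (fun p : EuclideanSpace ℝ (Fin d) × Ω => Y t p.1 p.2)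
  cont : ∀ᵐ ω ∂P, Continuous fun p : ℝ × EuclideanSpace ℝ (Fin d) => Y p.1 p.2 ω
  mart : ∀ s t x, 0 ≤ s → s ≤ t → ∀ f : Ω → ENNReal, Measurable[F s] f →
    ∫⁻ ω, f ω * gZ g Y t x ω ∂P = ∫⁻ ω, f ω * gZ g Y s x ω ∂P
  form : ∀ s u t x, 0 ≤ s → s ≤ u → u ≤ t → ∀ p q : ℝ,
    Integrable (fun ω => Real.exp (g * Y t x ω - d * t + p * (Y u x ω - g * u)
      + q * (Y s x ω - g * s))) P ∧
    ∫ ω, Real.exp (g * Y t x ω - d * t + p * (Y u x ω - g * u)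
      + q * (Y s x ω - g * s)) ∂P = Real.exp ((p ^ 2 * u + q ^ 2 * s) / 2 + p * q * s)
  osc : ∀ s x y, 0 ≤ s → ‖x - y‖ ≤ Real.exp (-s) →
    ∫⁻ ω, gZ g Y s x ω * ENNReal.ofReal (Real.exp (-(g * (Y s y ω - Y s x ω)))) ∂P
      ≤ ENNReal.ofReal C

lemma gauss_facts {Ω : Type*} [MeasurableSpace Ω] (P : Measure Ω) [IsProbabilityMeasure P]
    (S : Ω → ℝ) (hS : Measurable S) (v : NNReal) (h : Measure.map S P = gaussianReal 0 v) :
    MemLp S 2 P ∧ Integrable (fun ω => Real.exp (S ω)) P ∧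
    ∫ ω, Real.exp (S ω) ∂P = Real.exp ((∫ ω, S ω ^ 2 ∂P) / 2) := by
  have h2 : MemLp S 2 P := by
    have := memLp_id_gaussianReal (μ := 0) (v := v) 2
    rw [← h] at this
    exact (memLp_map_measure_iff aestronglyMeasurable_id hS.aemeasurable).1 this
  have h3 : Integrable (fun ω => Real.exp (S ω)) P := by
    have := integrable_exp_mul_gaussianReal (μ := 0) (v := v) 1
    rw [← h] at this
    have := (integrable_map_measure (by fun_prop) hS.aemeasurable).1 this
    simpa [Function.comp_def] using this
  refine ⟨h2, h3, ?_⟩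
  have h4 := mgf_gaussianReal h 1
  have h5 : ∫ ω, S ω ^ 2 ∂P = v := by
    have e0 : ∫ x, x ∂(gaussianReal 0 v) = 0 := integral_id_gaussianReal
    have e := variance_id_gaussianReal (μ := 0) (v := v)
    rw [variance_eq_integral (by fun_prop)] at e
    simp only [id_eq, e0, sub_zero] at e
    rw [← h, integral_map hS.aemeasurable (by fun_prop)] at e
    exact e
  rw [h5]
  simpa [mgf] using h4

/-- Jointly measurable version of the field. -/
lemma version_exists {d : ℕ} {Ω : Type*} [m0 : MeasurableSpace Ω] (P : Measure Ω)
    (X : ℝ → EuclideanSpace ℝ (Fin d) → Ω → ℝ)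
    (hXcont : ∀ᵐ ω ∂P, Continuous fun p : ℝ × EuclideanSpace ℝ (Fin d) => X p.1 p.2 ω)
    (F : ℝ → MeasurableSpace Ω) (hF : ∀ t x, 0 ≤ t → Measurable[F t] (X t x)) :
    ∃ Y : ℝ → EuclideanSpace ℝ (Fin d) → Ω → ℝ,
      (∀ᵐ ω ∂P, ∀ t x, Y t x ω = X t x ω) ∧
      ∀ t, 0 ≤ t → @Measurable _ _ (@Prod.instMeasurableSpace _ _ inferInstance (F t)) _
        (fun p : EuclideanSpace ℝ (Fin d) × Ω => Y t p.1 p.2) := by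
  let q : ℕ → SimpleFunc (EuclideanSpace ℝ (Fin d)) (EuclideanSpace ℝ (Fin d)) :=
    SimpleFunc.approxOn id measurable_id Set.univ 0 trivial
  refine ⟨fun t x ω => limsup (fun n => X t (q n x) ω) atTop, ?_, ?_⟩
  · filter_upwards [hXcont] with ω hω t x
    apply Tendsto.limsup_eq
    have h1 : Tendsto (fun n => q n x) atTop (nhds x) :=
      SimpleFunc.tendsto_approxOn measurable_id (Set.mem_univ _) (by simp)
    have h2 : Continuous fun x => X t x ω :=
      hω.comp (Continuous.prodMk_right t)
    exact (h2.tendsto x).comp h1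
  · intro t ht
    let _ := F t
    refine Measurable.limsup fun n => ?_
    have h : ∀ b, Measurable fun p : EuclideanSpace ℝ (Fin d) × Ω => X t b p.2 :=
      fun b => (hF t b ht).comp measurable_snd
    exact SimpleFunc.measurable_bind ((q n).comp Prod.fst measurable_fst)
      (fun b p => X t b p.2) h

lemma K_facts {d : ℕ} (k : EuclideanSpace ℝ (Fin d) → ℝ)
    (hk1 : ContDiff ℝ 1 k) (hk0 : k 0 = 1) (hksupp : HasCompactSupport k) :
    (∀ t, 0 ≤ t → ∫ u in Set.Icc (1:ℝ) (Real.exp t), k (u • (0:EuclideanSpace ℝ (Fin d))) / u = t)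
    ∧ ∃ L : ℝ, ∀ t, 0 ≤ t → ∀ z, ‖z‖ ≤ Real.exp (-t) →
      t - L ≤ ∫ u in Set.Icc (1:ℝ) (Real.exp t), k (u • z) / u := by
  have hA : ∀ t, 0 ≤ t →
      ∫ u in Set.Icc (1:ℝ) (Real.exp t), k (u • (0:EuclideanSpace ℝ (Fin d))) / u = t := by
    intro t ht
    have h1 : (1:ℝ) ≤ Real.exp t := Real.one_le_exp ht
    simp only [smul_zero, hk0]
    rw [integral_Icc_eq_integral_Ioc, ← intervalIntegral.integral_of_le h1,
      integral_one_div_of_pos one_pos (Real.exp_pos t)]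
    simp
  refine ⟨hA, ?_⟩
  obtain ⟨C, hC⟩ := ContDiff.lipschitzWith_of_hasCompactSupport hksupp hk1 one_ne_zero
  refine ⟨C, fun t ht z hz => ?_⟩
  have h1 : (1:ℝ) ≤ Real.exp t := Real.one_le_exp ht
  have hintk : ∀ w, IntegrableOn (fun u : ℝ => k (u • w) / u) (Set.Icc (1:ℝ) (Real.exp t)) := by
    intro w
    apply ContinuousOn.integrableOn_Icc
    apply ContinuousOn.div
    · have := hk1.continuous
      fun_prop
    · fun_prop
    · intro u hu
      have := hu.1
      positivity
  have h2 : ∫ u in Set.Icc (1:ℝ) (Real.exp t),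
      (k (u • (0:EuclideanSpace ℝ (Fin d))) / u - k (u • z) / u)
      ≤ ∫ u in Set.Icc (1:ℝ) (Real.exp t), C * ‖z‖ := by
    apply setIntegral_mono_on ((hintk 0).sub (hintk z))
      (integrableOn_const (by simp)) measurableSet_Icc
    intro u hu
    simp only [Pi.sub_apply]
    have hu0 : 0 < u := by linarith [hu.1]
    rw [← sub_div, div_le_iff₀ hu0]
    have := hC.dist_le_mul (u • 0) (u • z)
    rw [Real.dist_eq, smul_zero, dist_zero_left, norm_smul, Real.norm_of_nonneg hu0.le] at this
    rw [smul_zero]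
    nlinarith [le_abs_self (k 0 - k (u • z))]
  rw [integral_sub (hintk 0) (hintk z), hA t ht] at h2
  have h3 : ∫ u in Set.Icc (1:ℝ) (Real.exp t), (C:ℝ) * ‖z‖ ≤ C := by
    rw [setIntegral_const]
    simp only [measureReal_def, Real.volume_Icc, smul_eq_mul]
    rw [ENNReal.toReal_ofReal (by linarith)]
    have h4 : Real.exp t * ‖z‖ ≤ 1 := by
      calc Real.exp t * ‖z‖ ≤ Real.exp t * Real.exp (-t) := by gcongr
        _ = 1 := by rw [← Real.exp_add]; simp
    have := norm_nonneg z
    have h5 : (Real.exp t - 1) * ‖z‖ ≤ 1 := by nlinarith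
    nlinarith [C.coe_nonneg]
  linarith

lemma sq_expand {Ω : Type*} [MeasurableSpace Ω] (P : Measure Ω) (U V W : Ω → ℝ)
    (hU : MemLp U 2 P) (hV : MemLp V 2 P) (hW : MemLp W 2 P) (a b c : ℝ) :
    ∫ ω, (a * U ω + b * V ω + c * W ω) ^ 2 ∂P =
      a ^ 2 * ∫ ω, U ω * U ω ∂P + b ^ 2 * ∫ ω, V ω * V ω ∂P + c ^ 2 * ∫ ω, W ω * W ω ∂P
      + 2 * a * b * ∫ ω, V ω * U ω ∂P + 2 * a * c * ∫ ω, W ω * U ω ∂P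
      + 2 * b * c * ∫ ω, W ω * V ω ∂P := by
  have e : (fun ω => (a * U ω + b * V ω + c * W ω) ^ 2) = fun ω =>
      a ^ 2 * (U ω * U ω) + b ^ 2 * (V ω * V ω) + c ^ 2 * (W ω * W ω)
      + 2 * a * b * (V ω * U ω) + 2 * a * c * (W ω * U ω) + 2 * b * c * (W ω * V ω) := by
    funext ω; ring
  have i1 := (hU.integrable_mul hU).const_mul (a ^ 2)
  have i2 := (hV.integrable_mul hV).const_mul (b ^ 2)
  have i3 := (hW.integrable_mul hW).const_mul (c ^ 2)
  have i4 := (hV.integrable_mul hU).const_mul (2 * a * b)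
  have i5 := (hW.integrable_mul hU).const_mul (2 * a * c)
  have i6 := (hW.integrable_mul hV).const_mul (2 * b * c)
  simp only [Pi.mul_apply] at i1 i2 i3 i4 i5 i6
  have j2 : Integrable (fun ω => a ^ 2 * (U ω * U ω) + b ^ 2 * (V ω * V ω)) P := i1.add i2
  have j3 : Integrable (fun ω => a ^ 2 * (U ω * U ω) + b ^ 2 * (V ω * V ω)
    + c ^ 2 * (W ω * W ω)) P := j2.add i3
  have j4 : Integrable (fun ω => a ^ 2 * (U ω * U ω) + b ^ 2 * (V ω * V ω)
    + c ^ 2 * (W ω * W ω) + 2 * a * b * (V ω * U ω)) P := j3.add i4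
  have j5 : Integrable (fun ω => a ^ 2 * (U ω * U ω) + b ^ 2 * (V ω * V ω)
    + c ^ 2 * (W ω * W ω) + 2 * a * b * (V ω * U ω) + 2 * a * c * (W ω * U ω)) P := j4.add i5
  rw [e, integral_add j5 i6, integral_add j4 i5, integral_add j3 i4, integral_add j2 i3,
    integral_add i1 i2]
  simp only [integral_const_mul]

lemma core_exists
    {d : ℕ} (hd : 1 ≤ d)
    {Ω : Type*} [m0 : MeasurableSpace Ω] (P : Measure Ω) [IsProbabilityMeasure P]
    (k : EuclideanSpace ℝ (Fin d) → ℝ)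
    (hk1 : ContDiff ℝ 1 k) (hk0 : k 0 = 1)
    (hksupp : HasCompactSupport k)
    (X : ℝ → EuclideanSpace ℝ (Fin d) → Ω → ℝ)
    (hXmeas : ∀ t x, Measurable (X t x))
    (hXgauss : ∀ (n : ℕ) (c : Fin n → ℝ) (t : Fin n → ℝ)
        (x : Fin n → EuclideanSpace ℝ (Fin d)),
      ∃ v : NNReal,
        Measure.map (fun ω => ∑ i, c i * X (t i) (x i) ω) P = gaussianReal 0 v)
    (hXcent : ∀ t x, ∫ ω, X t x ω ∂P = 0)
    (hXcov : ∀ t, 0 ≤ t → ∀ x y : EuclideanSpace ℝ (Fin d),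
      ∫ ω, X t x ω * X t y ω ∂P = ∫ u in Set.Icc (1:ℝ) (Real.exp t), k (u • (x - y)) / u)
    (hXcont : ∀ᵐ ω ∂P, Continuous fun p : ℝ × EuclideanSpace ℝ (Fin d) => X p.1 p.2 ω)
    (hXindep : ∀ s t : ℝ, 0 ≤ s → s < t →
      Indep (⨆ x : EuclideanSpace ℝ (Fin d),
          MeasurableSpace.comap (fun ω => X t x ω - X s x ω) inferInstance)
        (⨆ u ∈ Set.Icc (0:ℝ) s, ⨆ x : EuclideanSpace ℝ (Fin d),
          MeasurableSpace.comap (X u x) inferInstance) P) :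
    ∃ (F : ℝ → MeasurableSpace Ω) (C : ℝ) (Y : ℝ → EuclideanSpace ℝ (Fin d) → Ω → ℝ),
      GCore P F (Real.sqrt (2 * (d:ℝ))) C Y ∧ ∀ᵐ ω ∂P, ∀ t x, Y t x ω = X t x ω := by
  have hdpos : (0:ℝ) < d := by exact_mod_cast hd
  set g := Real.sqrt (2 * (d:ℝ)) with hgdef
  have hg : g ^ 2 = 2 * (d:ℝ) := Real.sq_sqrt (by positivity)
  have hgpos : 0 < g := Real.sqrt_pos.2 (by positivity)
  let F : ℝ → MeasurableSpace Ω := fun s => ⨆ u ∈ Set.Icc (0:ℝ) s,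
    ⨆ x : EuclideanSpace ℝ (Fin d), MeasurableSpace.comap (X u x) inferInstance
  have hFX : ∀ t x, 0 ≤ t → Measurable[F t] (X t x) := by
    intro t x ht
    refine measurable_iff_comap_le.2 ?_
    exact le_iSup₂_of_le t ⟨ht, le_rfl⟩ (le_iSup_of_le x le_rfl)
  have hFle : ∀ t, F t ≤ m0 := fun t =>
    iSup₂_le fun u _ => iSup_le fun x => measurable_iff_comap_le.1 (hXmeas u x)
  have hFmono : ∀ s t, s ≤ t → F s ≤ F t := by
    intro s t hst
    exact iSup₂_le fun u hu => le_iSup₂_of_le u ⟨hu.1, hu.2.trans hst⟩ le_rfl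
  obtain ⟨Y, hYX, hYm⟩ := version_exists P X hXcont F hFX
  obtain ⟨hK0, L, hKL⟩ := K_facts k hk1 hk0 hksupp
  have hS3 : ∀ (a b c : ℝ) (t u s : ℝ) (x y z : EuclideanSpace ℝ (Fin d)),
      MemLp (fun ω => a * X t x ω + b * X u y ω + c * X s z ω) 2 P ∧
      Integrable (fun ω => Real.exp (a * X t x ω + b * X u y ω + c * X s z ω)) P ∧
      ∫ ω, Real.exp (a * X t x ω + b * X u y ω + c * X s z ω) ∂P
        = Real.exp ((∫ ω, (a * X t x ω + b * X u y ω + c * X s z ω) ^ 2 ∂P) / 2) := by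
    intro a b c t u s x y z
    obtain ⟨v, hv⟩ := hXgauss 3 ![a, b, c] ![t, u, s] ![x, y, z]
    have e : (fun ω => ∑ i, ![a, b, c] i * X (![t, u, s] i) (![x, y, z] i) ω) =
        fun ω => a * X t x ω + b * X u y ω + c * X s z ω := by
      funext ω
      simp [Fin.sum_univ_three]
    rw [e] at hv
    refine gauss_facts P _ ?_ v hv
    have := hXmeas t x
    have := hXmeas u y
    have := hXmeas s z
    fun_prop
  have hL2 : ∀ t x, MemLp (X t x) 2 P := by
    intro t x
    have := (hS3 1 0 0 t t t x x x).1
    simpa using this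
  have hcov : ∀ s t x y, 0 ≤ s → s ≤ t → ∫ ω, X s x ω * X t y ω ∂P =
      ∫ u in Set.Icc (1:ℝ) (Real.exp s), k (u • (x - y)) / u := by
    intro s t x y hs hst
    rw [← hXcov s hs]
    rcases hst.eq_or_lt with rfl | hlt
    · rfl
    have hind : IndepFun (fun ω => X t y ω - X s y ω) (X s x) P := by
      rw [IndepFun_iff_Indep]
      refine indep_of_indep_of_le_left (indep_of_indep_of_le_right (hXindep s t hs hlt) ?_) ?_
      · exact measurable_iff_comap_le.1 (hFX s x hs)
      · exact le_iSup (fun x => MeasurableSpace.comap (fun ω => X t x ω - X s x ω) inferInstance) y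
    have h0 := hind.integral_fun_mul_eq_mul_integral
      ((hXmeas t y).sub (hXmeas s y)).aestronglyMeasurable (hXmeas s x).aestronglyMeasurable
    rw [hXcent s x, mul_zero] at h0
    have h1 : ∫ ω, (X t y ω - X s y ω) * X s x ω ∂P
        = ∫ ω, X s x ω * X t y ω ∂P - ∫ ω, X s x ω * X s y ω ∂P := by
      have i1 : Integrable (fun ω => X s x ω * X t y ω) P := (hL2 s x).integrable_mul (hL2 t y)
      have i2 : Integrable (fun ω => X s x ω * X s y ω) P := (hL2 s x).integrable_mul (hL2 s y)
      rw [← integral_sub i1 i2]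
      congr 1
      funext ω
      ring
    linarith
  have hcovxx : ∀ s t x, 0 ≤ s → s ≤ t → ∫ ω, X s x ω * X t x ω ∂P = s := by
    intro s t x hs hst
    rw [hcov s t x x hs hst, sub_self, hK0 s hs]
  have hform : ∀ s u t x, 0 ≤ s → s ≤ u → u ≤ t → ∀ p q : ℝ,
      Integrable (fun ω => Real.exp (g * X t x ω - d * t + p * (X u x ω - g * u)
        + q * (X s x ω - g * s))) P ∧
      ∫ ω, Real.exp (g * X t x ω - d * t + p * (X u x ω - g * u)
        + q * (X s x ω - g * s)) ∂P = Real.exp ((p ^ 2 * u + q ^ 2 * s) / 2 + p * q * s) := by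
    intro s u t x hs hsu hut p q
    have e : (fun ω => Real.exp (g * X t x ω - d * t + p * (X u x ω - g * u)
        + q * (X s x ω - g * s))) = fun ω => Real.exp (- d * t - p * g * u - q * g * s) *
        Real.exp (g * X t x ω + p * X u x ω + q * X s x ω) := by
      funext ω
      rw [← Real.exp_add]
      ring_nf
    obtain ⟨-, h1, h2⟩ := hS3 g p q t u s x x x
    rw [e]
    refine ⟨h1.const_mul _, ?_⟩
    rw [integral_const_mul, h2, sq_expand P _ _ _ (hL2 t x) (hL2 u x) (hL2 s x),
      hcovxx t t x (by linarith) le_rfl, hcovxx u u x (by linarith) le_rfl,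
      hcovxx s s x hs le_rfl, hcovxx u t x (by linarith) hut, hcovxx s t x hs (by linarith),
      hcovxx s u x hs hsu, ← Real.exp_add, hg]
    ring_nf
  have hone : ∀ t x, 0 ≤ t → ∫⁻ ω, ENNReal.ofReal (Real.exp (g * X t x ω - (d:ℝ) * t)) ∂P = 1 := by
    intro t x ht
    obtain ⟨h1, h2⟩ := hform t t t x ht le_rfl le_rfl 0 0
    simp only [zero_mul, add_zero] at h1 h2
    rw [← ofReal_integral_eq_lintegral_ofReal h1 (ae_of_all _ fun _ => (Real.exp_pos _).le), h2]
    simp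
  refine ⟨F, Real.exp (4 * d * L), Y, ?_, hYX⟩
  refine ⟨hg, hgpos, hFle, hFmono, hYm, ?_, ?_, ?_, ?_⟩
  · filter_upwards [hXcont, hYX] with ω h1 h2
    simpa only [h2] using h1
  · intro s t x hs hst f hf
    have hred : ∀ t, ∫⁻ ω, f ω * gZ g Y t x ω ∂P =
        ∫⁻ ω, f ω * ENNReal.ofReal (Real.exp (g * X t x ω - (d:ℝ) * t)) ∂P := by
      intro t
      apply lintegral_congr_ae
      filter_upwards [hYX] with ω h2
      simp only [gZ, h2]
    rw [hred, hred]
    rcases hst.eq_or_lt with rfl | hlt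
    · rfl
    let F1 : MeasurableSpace Ω := ⨆ x : EuclideanSpace ℝ (Fin d),
      MeasurableSpace.comap (fun ω => X t x ω - X s x ω) inferInstance
    have hF1 : F1 ≤ m0 := iSup_le fun x =>
      measurable_iff_comap_le.1 ((hXmeas t x).sub (hXmeas s x))
    have hD : Measurable[F1] (fun ω => X t x ω - X s x ω) :=
      measurable_iff_comap_le.2
        (le_iSup (fun x => MeasurableSpace.comap (fun ω => X t x ω - X s x ω) inferInstance) x)
    have hD' : Measurable[F1] (fun ω => ENNReal.ofReal
        (Real.exp (g * (X t x ω - X s x ω) - d * (t - s)))) := by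
      have : Measurable fun r : ℝ => ENNReal.ofReal (Real.exp (g * r - d * (t - s))) := by
        fun_prop
      exact this.comp hD
    have key : ∀ f : Ω → ENNReal, Measurable[F s] f →
        ∫⁻ ω, f ω * ENNReal.ofReal (Real.exp (g * X t x ω - (d:ℝ) * t)) ∂P =
        (∫⁻ ω, ENNReal.ofReal (Real.exp (g * (X t x ω - X s x ω) - d * (t - s))) ∂P) *
        ∫⁻ ω, f ω * ENNReal.ofReal (Real.exp (g * X s x ω - (d:ℝ) * s)) ∂P := by
      intro f hf
      have hfm : Measurable[F s] fun ω => f ω *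
          ENNReal.ofReal (Real.exp (g * X s x ω - (d:ℝ) * s)) := by
        have h1 : Measurable fun r : ℝ => ENNReal.ofReal (Real.exp (g * r - d * s)) := by
          fun_prop
        exact hf.mul (h1.comp (hFX s x hs))
      rw [← lintegral_mul_eq_lintegral_mul_lintegral_of_independent_measurableSpace hF1 (hFle s)
        (hXindep s t hs hlt) hD' hfm]
      congr 1
      funext ω
      rw [mul_left_comm, ← ENNReal.ofReal_mul (Real.exp_pos _).le, ← Real.exp_add]
      ring_nf
    have h1 := key (fun _ => 1) measurable_const
    simp only [one_mul] at h1
    rw [hone t x (by linarith), hone s x hs, mul_one] at h1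
    rw [key f hf, ← h1, one_mul]
  · intro s u t x hs hsu hut p q
    have e : (fun ω => Real.exp (g * Y t x ω - d * t + p * (Y u x ω - g * u)
        + q * (Y s x ω - g * s))) =ᵐ[P] (fun ω => Real.exp (g * X t x ω - d * t +
        p * (X u x ω - g * u) + q * (X s x ω - g * s))) := by
      filter_upwards [hYX] with ω h2
      simp only [h2]
    obtain ⟨h1, h2⟩ := hform s u t x hs hsu hut p q
    exact ⟨h1.congr e.symm, (integral_congr_ae e).trans h2⟩
  · intro s x y hs hxy
    have e : (fun ω => gZ g Y s x ω * ENNReal.ofReal (Real.exp (-(g * (Y s y ω - Y s x ω)))))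
        =ᵐ[P] fun ω => ENNReal.ofReal (Real.exp (- d * s)) * ENNReal.ofReal
          (Real.exp ((2 * g) * X s x ω + (-g) * X s y ω + 0 * X s x ω)) := by
      filter_upwards [hYX] with ω h2
      simp only [gZ, h2]
      rw [← ENNReal.ofReal_mul (Real.exp_pos _).le, ← Real.exp_add,
        ← ENNReal.ofReal_mul (Real.exp_pos _).le, ← Real.exp_add]
      ring_nf
    obtain ⟨-, h1, h2⟩ := hS3 (2 * g) (-g) 0 s s s x y x
    rw [lintegral_congr_ae e, lintegral_const_mul' _ _ ENNReal.ofReal_ne_top,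
      ← ofReal_integral_eq_lintegral_ofReal h1 (ae_of_all _ fun _ => (Real.exp_pos _).le), h2,
      sq_expand P _ _ _ (hL2 s x) (hL2 s y) (hL2 s x),
      hcovxx s s x hs le_rfl, hcovxx s s y hs le_rfl, hcov s s y x hs le_rfl,
      ← ENNReal.ofReal_mul (Real.exp_pos _).le, ← Real.exp_add]
    have h3 := hKL s hs (y - x) (by rw [norm_sub_rev]; exact hxy)
    apply ENNReal.ofReal_le_ofReal
    apply Real.exp_le_exp.2
    set K := ∫ u in Set.Icc (1:ℝ) (Real.exp s), k (u • (y - x)) / u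
    have h4 : (2 * g) ^ 2 = 8 * d := by rw [mul_pow, hg]; ring
    have h5 : (-g) ^ 2 = 2 * d := by rw [neg_sq, hg]
    have h6 : 2 * (2 * g) * (-g) = - 8 * d := by
      have : 2 * (2 * g) * (-g) = - 4 * g ^ 2 := by ring
      rw [this, hg]; ring
    rw [h4, h5, h6]
    nlinarith

/-- The total mass of the chaos on a set. -/
def gM {d : ℕ} {Ω : Type*} (g : ℝ) (Y : ℝ → EuclideanSpace ℝ (Fin d) → Ω → ℝ)
    (A : Set (EuclideanSpace ℝ (Fin d))) (t : ℝ) (ω : Ω) : ENNReal :=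
  ∫⁻ x in A, gZ g Y t x ω

lemma meas_ind {Ω : Type*} (m : MeasurableSpace Ω) {H : Set Ω} (hH : MeasurableSet[m] H) :
    Measurable[m] (H.indicator (1 : Ω → ENNReal)) :=
  measurable_one.indicator hH

section core

set_option linter.unusedSectionVars false

variable {d : ℕ} {Ω : Type*} [m0 : MeasurableSpace Ω] {P : Measure Ω} [IsProbabilityMeasure P]
    {F : ℝ → MeasurableSpace Ω} {g C : ℝ} {Y : ℝ → EuclideanSpace ℝ (Fin d) → Ω → ℝ}

lemma gZ_meas (h : GCore P F g C Y) (t : ℝ) (ht : 0 ≤ t) :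
    @Measurable _ _ (@Prod.instMeasurableSpace _ _ inferInstance (F t)) _
    (fun p : EuclideanSpace ℝ (Fin d) × Ω => gZ g Y t p.1 p.2) := by
  have h1 : Measurable fun r : ℝ => ENNReal.ofReal (Real.exp (g * r - d * t)) := by fun_prop
  exact h1.comp (h.meas t ht)

lemma gM_meas (h : GCore P F g C Y) (A : Set (EuclideanSpace ℝ (Fin d)))
    (t : ℝ) (ht : 0 ≤ t) : Measurable[F t] (gM g Y A t) := by
  have h1 := gZ_meas h t ht
  let _ := F t
  exact Measurable.lintegral_prod_left' h1

lemma gM_swap (h : GCore P F g C Y) (A : Set (EuclideanSpace ℝ (Fin d)))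
    (t : ℝ) (ht : 0 ≤ t) (f : Ω → ENNReal) (hf : Measurable f) :
    ∫⁻ ω, f ω * gM g Y A t ω ∂P = ∫⁻ x in A, ∫⁻ ω, f ω * gZ g Y t x ω ∂P := by
  have h1 : Measurable (fun p : EuclideanSpace ℝ (Fin d) × Ω => gZ g Y t p.1 p.2) :=
    (gZ_meas h t ht).mono (sup_le_sup le_rfl (MeasurableSpace.comap_mono (h.le t))) le_rfl
  rw [lintegral_lintegral_swap]
  · refine lintegral_congr fun ω => ?_
    rw [gM, lintegral_const_mul]
    exact h1.comp measurable_prodMk_right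
  · exact ((hf.comp measurable_snd).mul h1).aemeasurable

lemma gM_mart (h : GCore P F g C Y) (A : Set (EuclideanSpace ℝ (Fin d)))
    (s t : ℝ) (hs : 0 ≤ s) (hst : s ≤ t) (f : Ω → ENNReal) (hf : Measurable[F s] f) :
    ∫⁻ ω, f ω * gM g Y A t ω ∂P = ∫⁻ ω, f ω * gM g Y A s ω ∂P := by
  have hf' : Measurable f := hf.mono (h.le s) le_rfl
  rw [gM_swap h A t (hs.trans hst) f hf', gM_swap h A s hs f hf']
  exact lintegral_congr fun x => h.mart s t x hs hst f hf

lemma gM_mart_set (h : GCore P F g C Y) (A : Set (EuclideanSpace ℝ (Fin d)))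
    (s t : ℝ) (hs : 0 ≤ s) (hst : s ≤ t) (H : Set Ω) (hH : MeasurableSet[F s] H) :
    ∫⁻ ω in H, gM g Y A t ω ∂P = ∫⁻ ω in H, gM g Y A s ω ∂P := by
  have hH' : MeasurableSet H := h.le s _ hH
  have h1 := gM_mart h A s t hs hst (H.indicator 1) (meas_ind (F s) hH)
  have e : ∀ t, ∫⁻ ω, H.indicator 1 ω * gM g Y A t ω ∂P = ∫⁻ ω in H, gM g Y A t ω ∂P := by
    intro t
    rw [← lintegral_indicator hH']
    refine lintegral_congr fun ω => ?_
    by_cases hω : ω ∈ H <;> simp [hω]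
  rwa [e, e] at h1

lemma gZ_one (h : GCore P F g C Y) (t : ℝ) (ht : 0 ≤ t) (x : EuclideanSpace ℝ (Fin d)) :
    ∫⁻ ω, gZ g Y t x ω ∂P = 1 := by
  obtain ⟨h1, h2⟩ := h.form t t t x ht le_rfl le_rfl 0 0
  simp only [zero_mul, add_zero] at h1 h2
  unfold gZ
  rw [← ofReal_integral_eq_lintegral_ofReal h1 (ae_of_all _ fun _ => (Real.exp_pos _).le), h2]
  simp

lemma gM_mean (h : GCore P F g C Y) (A : Set (EuclideanSpace ℝ (Fin d)))
    (t : ℝ) (ht : 0 ≤ t) : ∫⁻ ω, gM g Y A t ω ∂P = volume A := by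
  have := gM_swap h A t ht (fun _ => 1) measurable_const
  simp only [one_mul, gZ_one h t ht] at this
  rw [this]
  simp

lemma maximal_fin (h : GCore P F g C Y) (A : Set (EuclideanSpace ℝ (Fin d))) (l : ENNReal)
    (n : ℕ) : ∀ (τ : ℕ → ℝ), Monotone τ → 0 ≤ τ 0 → ∀ H : Set Ω, MeasurableSet[F (τ 0)] H →
    l * P (H ∩ {ω | ∃ i ≤ n, l ≤ gM g Y A (τ i) ω}) ≤ ∫⁻ ω in H, gM g Y A (τ 0) ω ∂P := by
  induction n with
  | zero =>
    intro τ hτ h0 H hH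
    have hm := (gM_meas h A (τ 0) h0).mono (h.le _) le_rfl
    have := mul_meas_ge_le_lintegral (μ := P.restrict H) hm l
    rw [Measure.restrict_apply (measurableSet_le measurable_const hm), Set.inter_comm] at this
    simpa using this
  | succ n ih =>
    intro τ hτ h0 H hH
    have hmF := gM_meas h A (τ 0) h0
    have hm := hmF.mono (h.le _) le_rfl
    have hsF : MeasurableSet[F (τ 0)] {ω | l ≤ gM g Y A (τ 0) ω} :=
      @measurableSet_le _ _ _ _ _ (F (τ 0)) _ _ _ _ _ measurable_const hmF
    set S := {ω | l ≤ gM g Y A (τ 0) ω} with hS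
    have h1 : l * P (H ∩ S) ≤ ∫⁻ ω in H ∩ S, gM g Y A (τ 0) ω ∂P := by
      have := mul_meas_ge_le_lintegral (μ := P.restrict (H ∩ S)) hm l
      rw [Measure.restrict_apply (measurableSet_le measurable_const hm)] at this
      have e : {ω | l ≤ gM g Y A (τ 0) ω} ∩ (H ∩ S) = H ∩ S := by
        rw [← hS]; ext ω; simp
      rwa [e] at this
    have hle : τ 0 ≤ τ 1 := hτ (by simp)
    have hHS : MeasurableSet[F (τ 0)] (H \ S) := hH.diff hsF
    have h2 := ih (fun i => τ (i + 1)) (fun i j hij => hτ (by omega)) (h0.trans hle) (H \ S)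
      (h.mono _ _ hle _ hHS)
    simp only [zero_add] at h2
    rw [gM_mart_set h A (τ 0) (τ 1) h0 hle (H \ S) hHS] at h2
    have h3 : H ∩ {ω | ∃ i ≤ n + 1, l ≤ gM g Y A (τ i) ω} ⊆
        (H ∩ S) ∪ ((H \ S) ∩ {ω | ∃ i ≤ n, l ≤ gM g Y A (τ (i + 1)) ω}) := by
      rintro ω ⟨hω, i, hi, hl⟩
      by_cases hωS : ω ∈ S
      · exact Or.inl ⟨hω, hωS⟩
      · rcases i with _ | i
        · exact absurd hl hωS
        · exact Or.inr ⟨⟨hω, hωS⟩, i, by omega, hl⟩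
    calc l * P (H ∩ {ω | ∃ i ≤ n + 1, l ≤ gM g Y A (τ i) ω})
        ≤ l * (P (H ∩ S) + P ((H \ S) ∩ {ω | ∃ i ≤ n, l ≤ gM g Y A (τ (i + 1)) ω})) := by
          gcongr
          exact (measure_mono h3).trans (measure_union_le _ _)
      _ ≤ ∫⁻ ω in H ∩ S, gM g Y A (τ 0) ω ∂P + ∫⁻ ω in H \ S, gM g Y A (τ 0) ω ∂P := by
          rw [mul_add]
          exact add_le_add h1 h2
      _ = _ := lintegral_inter_add_sdiff _ _ (h.le _ _ hsF)

lemma maximal_seq (h : GCore P F g C Y) (A : Set (EuclideanSpace ℝ (Fin d))) (l : ENNReal)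
    (τ : ℕ → ℝ) (hτ : Monotone τ) (h0 : 0 ≤ τ 0) (H : Set Ω) (hH : MeasurableSet[F (τ 0)] H) :
    l * P (H ∩ {ω | ∃ i, l ≤ gM g Y A (τ i) ω}) ≤ ∫⁻ ω in H, gM g Y A (τ 0) ω ∂P := by
  have e : H ∩ {ω | ∃ i, l ≤ gM g Y A (τ i) ω}
      = ⋃ n : ℕ, H ∩ {ω | ∃ i ≤ n, l ≤ gM g Y A (τ i) ω} := by
    ext ω
    simp only [Set.mem_inter_iff, Set.mem_ofPred_eq, Set.mem_iUnion]
    constructor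
    · rintro ⟨a, i, b⟩
      exact ⟨i, a, i, le_rfl, b⟩
    · rintro ⟨n, a, i, -, b⟩
      exact ⟨a, i, b⟩
  have hmono : Monotone fun n : ℕ => H ∩ {ω | ∃ i ≤ n, l ≤ gM g Y A (τ i) ω} := by
    rintro m n hmn ω ⟨a, i, hi, b⟩
    exact ⟨a, i, hi.trans hmn, b⟩
  rw [e, hmono.measure_iUnion, ENNReal.mul_iSup]
  exact iSup_le fun n => maximal_fin h A l n τ hτ h0 H hH

lemma gM_lsc (h : GCore P F g C Y) (A : Set (EuclideanSpace ℝ (Fin d))) :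
    ∀ᵐ ω ∂P, ∀ (t : ℝ) (τ : ℕ → ℝ), Tendsto τ atTop (nhds t) →
      gM g Y A t ω ≤ liminf (fun n => gM g Y A (τ n) ω) atTop := by
  filter_upwards [h.cont] with ω hω t τ hτ
  have hc : Continuous fun p : ℝ × EuclideanSpace ℝ (Fin d) => gZ g Y p.1 p.2 ω := by
    exact ENNReal.continuous_ofReal.comp (Real.continuous_exp.comp
      ((hω.const_mul g).sub (continuous_fst.const_mul (d:ℝ))))
  have h1 : ∀ x, gZ g Y t x ω = liminf (fun n => gZ g Y (τ n) x ω) atTop := by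
    intro x
    symm
    apply Tendsto.liminf_eq
    have h2 : Tendsto (fun n => (τ n, x)) atTop (nhds (t, x)) :=
      hτ.prodMk_nhds tendsto_const_nhds
    have h3 := (hc.tendsto (t, x)).comp h2
    exact h3
  unfold gM
  simp only [h1]
  exact lintegral_liminf_le fun n => Continuous.measurable
    (hc.comp (Continuous.prodMk_right (τ n)))

lemma maximal_cont (h : GCore P F g C Y) (A : Set (EuclideanSpace ℝ (Fin d))) (l : ENNReal)
    (s : ℝ) (hs : 0 ≤ s) (H : Set Ω) (hH : MeasurableSet[F s] H) :
    l * P (H ∩ {ω | ∃ t, s ≤ t ∧ l < gM g Y A t ω}) ≤ ∫⁻ ω in H, gM g Y A s ω ∂P := by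
  let τ : ℕ → ℕ → ℝ := fun n i => s + (i:ℝ) / ((n:ℝ) + 1)
  let E : ℕ → Set Ω := fun n => H ∩ {ω | ∃ i, l ≤ gM g Y A (τ n i) ω}
  have hE : ∀ n, l * P (E n) ≤ ∫⁻ ω in H, gM g Y A s ω ∂P := by
    intro n
    have e : τ n 0 = s := by simp [τ]
    have := maximal_seq h A l (τ n) (fun i j hij => by
      simp only [τ]; gcongr) (by rw [e]; exact hs) H (by rw [e]; exact hH)
    rwa [e] at this
  have hmono : Monotone fun N : ℕ => ⋂ n ≥ N, E n := by
    intro M N hMN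
    exact Set.biInter_subset_biInter_left fun n (hn : N ≤ n) => hMN.trans hn
  have hsub : (H ∩ {ω | ∃ t, s ≤ t ∧ l < gM g Y A t ω} : Set Ω) ≤ᵐ[P] ⋃ N : ℕ, ⋂ n ≥ N, E n := by
    filter_upwards [gM_lsc h A] with ω hω
    rintro ⟨hωH, t, hst, hl⟩
    have ht : Tendsto (fun n : ℕ => τ n ⌊(t - s) * ((n:ℝ) + 1)⌋₊) atTop (nhds t) := by
      have h1 : Tendsto (fun x : ℝ => (⌊(t - s) * x⌋₊ : ℝ) / x) atTop (nhds (t - s)) :=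
        tendsto_nat_floor_mul_div_atTop (by linarith)
      have h2 : Tendsto (fun n : ℕ => (n:ℝ) + 1) atTop atTop :=
        tendsto_atTop_add_const_right _ _ tendsto_natCast_atTop_atTop
      have h3 := (h1.comp h2).const_add s
      simpa using h3
    have h1 := eventually_lt_of_lt_liminf (hl.trans_le (hω t _ ht))
    obtain ⟨N, hN⟩ := eventually_atTop.1 h1
    refine Set.mem_iUnion.2 ⟨N, Set.mem_iInter₂.2 fun n hn => ⟨hωH, _, (hN n hn).le⟩⟩
  calc l * P (H ∩ {ω | ∃ t, s ≤ t ∧ l < gM g Y A t ω})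
      ≤ l * P (⋃ N : ℕ, ⋂ n ≥ N, E n) := by gcongr l * ?_; exact measure_mono_ae hsub
    _ = ⨆ N, l * P (⋂ n ≥ N, E n) := by rw [hmono.measure_iUnion, ENNReal.mul_iSup]
    _ ≤ _ := by
      refine iSup_le fun N => le_trans ?_ (hE N)
      gcongr
      exact Set.iInter₂_subset N le_rfl

lemma term_form (h : GCore P F g C Y) (x : EuclideanSpace ℝ (Fin d)) (s u t p q : ℝ)
    (hs : 0 ≤ s) (hsu : s ≤ u) (hut : u ≤ t) (hp : p ^ 2 * u = 1) (hq : q ^ 2 * s = 1) :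
    Integrable (fun ω => Real.exp (g * Y t x ω - d * t) *
      ((Real.exp (p * (Y u x ω - g * u)) - Real.exp (1 / 2)) *
       (Real.exp (q * (Y s x ω - g * s)) - Real.exp (1 / 2)))) P ∧
    ∫ ω, Real.exp (g * Y t x ω - d * t) *
      ((Real.exp (p * (Y u x ω - g * u)) - Real.exp (1 / 2)) *
       (Real.exp (q * (Y s x ω - g * s)) - Real.exp (1 / 2))) ∂P
      = Real.exp (1 + p * q * s) - Real.exp 1 := by
  obtain ⟨a1, b1⟩ := h.form s u t x hs hsu hut p q
  obtain ⟨a2, b2⟩ := h.form s u t x hs hsu hut p 0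
  obtain ⟨a3, b3⟩ := h.form s u t x hs hsu hut 0 q
  obtain ⟨a4, b4⟩ := h.form s u t x hs hsu hut 0 0
  have e : (fun ω => Real.exp (g * Y t x ω - d * t) *
      ((Real.exp (p * (Y u x ω - g * u)) - Real.exp (1 / 2)) *
       (Real.exp (q * (Y s x ω - g * s)) - Real.exp (1 / 2)))) = fun ω =>
      Real.exp (g * Y t x ω - d * t + p * (Y u x ω - g * u) + q * (Y s x ω - g * s))
      - Real.exp (1 / 2) *
        Real.exp (g * Y t x ω - d * t + p * (Y u x ω - g * u) + 0 * (Y s x ω - g * s))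
      - Real.exp (1 / 2) *
        Real.exp (g * Y t x ω - d * t + 0 * (Y u x ω - g * u) + q * (Y s x ω - g * s))
      + Real.exp (1 / 2) * Real.exp (1 / 2) *
        Real.exp (g * Y t x ω - d * t + 0 * (Y u x ω - g * u) + 0 * (Y s x ω - g * s)) := by
    funext ω
    simp only [zero_mul, add_zero, Real.exp_add]
    ring
  have i2 := a2.const_mul (Real.exp (1 / 2))
  have i3 := a3.const_mul (Real.exp (1 / 2))
  have i4 := a4.const_mul (Real.exp (1 / 2) * Real.exp (1 / 2))
  have j1 := a1.sub i2
  have j2 := j1.sub i3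
  rw [e]
  refine ⟨j2.add i4, ?_⟩
  have e2 := integral_add j2 i4
  have e3 := integral_sub j1 i3
  have e4 := integral_sub a1 i2
  simp only [Pi.sub_apply] at e2 e3 e4
  rw [e2, e3, e4, integral_const_mul, integral_const_mul, integral_const_mul, b1, b2, b3, b4]
  rw [hp, hq, ← Real.exp_add, ← Real.exp_add, ← Real.exp_add, ← Real.exp_add]
  norm_num

lemma gauss_est (h : GCore P F g C Y) (x : EuclideanSpace ℝ (Fin d)) (N : ℕ) (hN : 1 ≤ N)
    (r a t : ℝ) (hr : 1 ≤ r) (ha : 0 ≤ a) (har : Real.exp (a / r) ≤ 5 / 4)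
    (ht : ∀ n < N, r ^ (2 * (n + 1)) ≤ t) :
    ∫⁻ ω, {ω | ∀ n < N, Y (r ^ (2 * (n + 1))) x ω - g * r ^ (2 * (n + 1)) ≤ a}.indicator 1 ω
      * gZ g Y t x ω ∂P ≤
    ENNReal.ofReal (16 * (Real.exp 2 / N + Real.exp 1 * (Real.exp (1 / r) - 1))) := by
  have hr0 : 0 < r := by linarith
  have hNpos : (0:ℝ) < N := by exact_mod_cast hN
  set m := Real.exp (1 / 2) with hm
  let V : ℕ → Ω → ℝ := fun n ω =>
    Real.exp ((1 / r ^ (n + 1)) * (Y (r ^ (2 * (n + 1))) x ω - g * r ^ (2 * (n + 1)))) - m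
  let w : Ω → ℝ := fun ω => Real.exp (g * Y t x ω - d * t)
  have hpq : ∀ n, (1 / r ^ (n + 1)) ^ 2 * r ^ (2 * (n + 1)) = 1 := by
    intro n
    field_simp
    ring
  have hpow : ∀ i j : ℕ, i ≤ j → r ^ (2 * (i + 1)) ≤ r ^ (2 * (j + 1)) := by
    intro i j hij
    exact pow_le_pow_right₀ hr (by omega)
  have hterm : ∀ i j, i ≤ j → j < N → Integrable (fun ω => w ω * (V j ω * V i ω)) P ∧
      ∫ ω, w ω * (V j ω * V i ω) ∂P ≤ (if i = j then Real.exp 2 else 0)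
        + Real.exp 1 * (Real.exp (1 / r) - 1) := by
    intro i j hij hj
    obtain ⟨h1, h2⟩ := term_form h x (r ^ (2 * (i + 1))) (r ^ (2 * (j + 1))) t
      (1 / r ^ (j + 1)) (1 / r ^ (i + 1)) (by positivity) (hpow i j hij) (ht j hj) (hpq j) (hpq i)
    refine ⟨h1, h2.le.trans ?_⟩
    have hexp1 : 0 ≤ Real.exp (1 / r) - 1 := by
      have : 0 ≤ 1 / r := by positivity
      linarith [Real.one_le_exp this]
    split_ifs with hc
    · subst hc
      have e1 : 1 / r ^ (i + 1) * (1 / r ^ (i + 1)) * r ^ (2 * (i + 1)) = 1 := by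
        have := hpq i
        rw [sq] at this
        exact this
      rw [e1]
      have := Real.exp_pos 1
      norm_num
      have := mul_nonneg this.le hexp1
      simp only [one_div] at this
      linarith [Real.exp_pos 1]
    · have hlt : i + 1 ≤ j := by omega
      have e1 : 1 / r ^ (j + 1) * (1 / r ^ (i + 1)) * r ^ (2 * (i + 1)) ≤ 1 / r := by
        have e2 : r ^ (2 * (i + 1)) = r ^ (i + 1) * r ^ (i + 1) := by ring
        rw [e2]
        have e3 : 1 / r ^ (j + 1) * (1 / r ^ (i + 1)) * (r ^ (i + 1) * r ^ (i + 1))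
            = r ^ (i + 1) / r ^ (j + 1) := by field_simp
        rw [e3, div_le_div_iff₀ (by positivity) hr0, one_mul, ← pow_succ]
        exact pow_le_pow_right₀ hr (by omega)
      have e4 : Real.exp (1 + 1 / r ^ (j + 1) * (1 / r ^ (i + 1)) * r ^ (2 * (i + 1)))
          ≤ Real.exp 1 * Real.exp (1 / r) := by
        rw [← Real.exp_add]
        exact Real.exp_le_exp.2 (by linarith)
      linarith
  have hterm' : ∀ i j, i < N → j < N → Integrable (fun ω => w ω * (V i ω * V j ω)) P ∧
      ∫ ω, w ω * (V i ω * V j ω) ∂P ≤ (if i = j then Real.exp 2 else 0)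
        + Real.exp 1 * (Real.exp (1 / r) - 1) := by
    intro i j hi hj
    rcases le_total i j with hij | hij
    · have := hterm i j hij hj
      simpa only [mul_comm (V i _)] using this
    · have := hterm j i hij hi
      simpa only [eq_comm] using this
  let ψ : Ω → ℝ := fun ω => ∑ i ∈ Finset.range N, ∑ j ∈ Finset.range N, w ω * (V i ω * V j ω)
  have hψ : ∀ ω, ψ ω = w ω * (∑ i ∈ Finset.range N, V i ω) ^ 2 := by
    intro ω
    simp only [ψ]
    rw [sq, Finset.sum_mul_sum, Finset.mul_sum]
    simp only [Finset.mul_sum]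
  have hψi : Integrable ψ P := by
    refine integrable_finsetSum _ fun i hi => integrable_finsetSum _ fun j hj => ?_
    exact (hterm' i j (Finset.mem_range.1 hi) (Finset.mem_range.1 hj)).1
  have hψint : ∫ ω, ψ ω ∂P ≤ N * Real.exp 2 + N ^ 2 * (Real.exp 1 * (Real.exp (1 / r) - 1)) := by
    calc ∫ ω, ψ ω ∂P = ∑ i ∈ Finset.range N, ∑ j ∈ Finset.range N,
        ∫ ω, w ω * (V i ω * V j ω) ∂P := by
          rw [integral_finsetSum]
          · refine Finset.sum_congr rfl fun i hi => ?_
            rw [integral_finsetSum]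
            exact fun j hj => (hterm' i j (Finset.mem_range.1 hi) (Finset.mem_range.1 hj)).1
          · exact fun i hi => integrable_finsetSum _ fun j hj =>
              (hterm' i j (Finset.mem_range.1 hi) (Finset.mem_range.1 hj)).1
      _ ≤ ∑ i ∈ Finset.range N, ∑ j ∈ Finset.range N, ((if i = j then Real.exp 2 else 0)
        + Real.exp 1 * (Real.exp (1 / r) - 1)) := by
          refine Finset.sum_le_sum fun i hi => Finset.sum_le_sum fun j hj => ?_
          exact (hterm' i j (Finset.mem_range.1 hi) (Finset.mem_range.1 hj)).2
      _ = _ := by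
          have e1 : ∀ i ∈ Finset.range N, ∑ j ∈ Finset.range N,
              ((if i = j then Real.exp 2 else 0) + Real.exp 1 * (Real.exp (1 / r) - 1))
              = Real.exp 2 + N * (Real.exp 1 * (Real.exp (1 / r) - 1)) := by
            intro i hi
            rw [Finset.sum_add_distrib, Finset.sum_ite_eq, if_pos hi]
            simp
          rw [Finset.sum_congr rfl e1]
          simp only [Finset.sum_const, Finset.card_range, nsmul_eq_mul]
          ring
  have hpt : ∀ ω, {ω | ∀ n < N, Y (r ^ (2 * (n + 1))) x ω - g * r ^ (2 * (n + 1)) ≤ a}.indicator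
      (1 : Ω → ENNReal) ω * gZ g Y t x ω ≤ ENNReal.ofReal (16 / N ^ 2 * ψ ω) := by
    intro ω
    by_cases hω : ω ∈ {ω | ∀ n < N, Y (r ^ (2 * (n + 1))) x ω - g * r ^ (2 * (n + 1)) ≤ a}
    · rw [Set.indicator_of_mem hω, Pi.one_apply, one_mul, gZ]
      apply ENNReal.ofReal_le_ofReal
      rw [hψ]
      have hV : ∀ i ∈ Finset.range N, V i ω ≤ -(1 / 4) := by
        intro i hi
        have h1 : Y (r ^ (2 * (i + 1))) x ω - g * r ^ (2 * (i + 1)) ≤ a :=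
          hω i (Finset.mem_range.1 hi)
        have h2 : (1 / r ^ (i + 1)) * (Y (r ^ (2 * (i + 1))) x ω - g * r ^ (2 * (i + 1)))
            ≤ a / r := by
          calc _ ≤ (1 / r ^ (i + 1)) * a := by gcongr
            _ ≤ (1 / r) * a := by
              gcongr
              exact le_self_pow₀ hr (by omega)
            _ = a / r := by ring
        have h3 := Real.exp_le_exp.2 h2
        have h4 : (3:ℝ) / 2 ≤ m := by
          have := Real.add_one_le_exp (1 / 2 : ℝ)
          rw [hm]; linarith
        simp only [V]
        linarith
      have hsum : ∑ i ∈ Finset.range N, V i ω ≤ -(N / 4) := by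
        have := Finset.sum_le_sum hV
        simp only [Finset.sum_const, Finset.card_range, nsmul_eq_mul] at this
        linarith
      have hsq : (N:ℝ) ^ 2 / 16 ≤ (∑ i ∈ Finset.range N, V i ω) ^ 2 := by
        nlinarith
      have hw : 0 < w ω := Real.exp_pos _
      calc Real.exp (g * Y t x ω - d * t) = 16 / N ^ 2 * (w ω * (N ^ 2 / 16)) := by
            simp only [w]; field_simp
        _ ≤ _ := by gcongr
    · rw [Set.indicator_of_notMem hω, zero_mul]
      exact zero_le
  calc _ ≤ ∫⁻ ω, ENNReal.ofReal (16 / N ^ 2 * ψ ω) ∂P := lintegral_mono hpt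
    _ = ENNReal.ofReal (∫ ω, 16 / N ^ 2 * ψ ω ∂P) := by
      rw [ofReal_integral_eq_lintegral_ofReal (hψi.const_mul _)]
      refine ae_of_all _ fun ω => ?_
      simp only [hψ, w, Pi.zero_apply]
      positivity
    _ ≤ _ := by
      apply ENNReal.ofReal_le_ofReal
      rw [integral_const_mul]
      calc 16 / (N:ℝ) ^ 2 * ∫ ω, ψ ω ∂P ≤ 16 / (N:ℝ) ^ 2 *
          (N * Real.exp 2 + N ^ 2 * (Real.exp 1 * (Real.exp (1 / r) - 1))) := by gcongr
        _ = _ := by field_simp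

lemma det_ball {E : Type*} [MeasurableSpace E] (μ : Measure E) (B : Set E) (hB : μ B ≠ ⊤)
    (f : E → ℝ) (hf : Measurable f) (L : ℝ) (hL : 0 < L)
    (hU : ∫⁻ y in B, ENNReal.ofReal (Real.exp (-f y)) ∂μ ≤ ENNReal.ofReal L * μ B) :
    ENNReal.ofReal (1 / L) * μ B ≤ ∫⁻ y in B, ENNReal.ofReal (Real.exp (f y)) ∂μ := by
  have hpt : ∀ y, ENNReal.ofReal (1 / L) + ENNReal.ofReal (1 / L) ≤
      ENNReal.ofReal (Real.exp (f y)) + ENNReal.ofReal (1 / L ^ 2) *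
        ENNReal.ofReal (Real.exp (-f y)) := by
    intro y
    rw [← ENNReal.ofReal_mul (by positivity), ← ENNReal.ofReal_add (by positivity) (by positivity),
      ← ENNReal.ofReal_add (by positivity) (by positivity)]
    apply ENNReal.ofReal_le_ofReal
    rw [Real.exp_neg]
    have hu := Real.exp_pos (f y)
    set u := Real.exp (f y)
    have e : u + 1 / L ^ 2 * u⁻¹ - (1 / L + 1 / L) = (u * L - 1) ^ 2 / (L ^ 2 * u) := by
      field_simp
      ring
    have : 0 ≤ (u * L - 1) ^ 2 / (L ^ 2 * u) := by positivity
    linarith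
  have h1 := lintegral_mono (μ := μ.restrict B) hpt
  rw [lintegral_const, Measure.restrict_apply_univ, lintegral_add_left (by fun_prop),
    lintegral_const_mul _ (by fun_prop), add_mul] at h1
  have h2 : ENNReal.ofReal (1 / L ^ 2) * ∫⁻ y in B, ENNReal.ofReal (Real.exp (-f y)) ∂μ
      ≤ ENNReal.ofReal (1 / L) * μ B := by
    calc _ ≤ ENNReal.ofReal (1 / L ^ 2) * (ENNReal.ofReal L * μ B) := by gcongr
      _ = _ := by
        rw [← mul_assoc, ← ENNReal.ofReal_mul (by positivity)]
        congr 2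
        field_simp
  have h3 := h1.trans (add_le_add le_rfl h2)
  exact (ENNReal.add_le_add_iff_right (ENNReal.mul_ne_top ENNReal.ofReal_ne_top hB)).1 h3

/-- The averaged inverse local oscillation. -/
def gU {d : ℕ} {Ω : Type*} (g : ℝ) (Y : ℝ → EuclideanSpace ℝ (Fin d) → Ω → ℝ)
    (x : EuclideanSpace ℝ (Fin d)) (s : ℝ) (ω : Ω) : ENNReal :=
  ∫⁻ y in Metric.ball x (Real.exp (-s)), ENNReal.ofReal (Real.exp (-(g * (Y s y ω - Y s x ω))))

lemma gU_meas_prod (h : GCore P F g C Y) (x : EuclideanSpace ℝ (Fin d)) (s : ℝ) (hs : 0 ≤ s) :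
    @Measurable _ _ (@Prod.instMeasurableSpace _ _ inferInstance (F s)) _
    (fun p : EuclideanSpace ℝ (Fin d) × Ω =>
      ENNReal.ofReal (Real.exp (-(g * (Y s p.1 p.2 - Y s x p.2))))) := by
  have h1 := h.meas s hs
  let _ := F s
  have h2 : Measurable fun p : EuclideanSpace ℝ (Fin d) × Ω => Y s x p.2 :=
    h1.comp (measurable_const.prodMk measurable_snd)
  have h3 : Measurable fun r : ℝ => ENNReal.ofReal (Real.exp (-(g * r))) := by fun_prop
  exact h3.comp (h1.sub h2)

lemma gU_meas (h : GCore P F g C Y) (x : EuclideanSpace ℝ (Fin d)) (s : ℝ) (hs : 0 ≤ s) :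
    Measurable[F s] (gU g Y x s) := by
  have h1 := gU_meas_prod h x s hs
  let _ := F s
  exact Measurable.lintegral_prod_left' h1

lemma gU_mean (h : GCore P F g C Y) (x : EuclideanSpace ℝ (Fin d)) (s t : ℝ) (hs : 0 ≤ s)
    (hst : s ≤ t) :
    ∫⁻ ω, gU g Y x s ω * gZ g Y t x ω ∂P ≤
      ENNReal.ofReal C * volume (Metric.ball x (Real.exp (-s))) := by
  rw [h.mart s t x hs hst _ (gU_meas h x s hs)]
  have h1 : Measurable (fun p : EuclideanSpace ℝ (Fin d) × Ω => gZ g Y s p.1 p.2) :=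
    (gZ_meas h s hs).mono (sup_le_sup le_rfl (MeasurableSpace.comap_mono (h.le s))) le_rfl
  have h2 : Measurable (fun p : EuclideanSpace ℝ (Fin d) × Ω =>
      ENNReal.ofReal (Real.exp (-(g * (Y s p.1 p.2 - Y s x p.2))))) :=
    (gU_meas_prod h x s hs).mono (sup_le_sup le_rfl (MeasurableSpace.comap_mono (h.le s))) le_rfl
  have hZ : Measurable (fun ω => gZ g Y s x ω) := h1.comp measurable_prodMk_left
  have e : ∀ ω, gU g Y x s ω * gZ g Y s x ω = ∫⁻ y in Metric.ball x (Real.exp (-s)),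
      gZ g Y s x ω * ENNReal.ofReal (Real.exp (-(g * (Y s y ω - Y s x ω)))) := by
    intro ω
    have h3 : Measurable fun y => ENNReal.ofReal (Real.exp (-(g * (Y s y ω - Y s x ω)))) :=
      h2.comp measurable_prodMk_right
    rw [lintegral_const_mul _ h3, mul_comm, gU]
  simp only [e]
  rw [lintegral_lintegral_swap]
  · calc _ ≤ ∫⁻ y in Metric.ball x (Real.exp (-s)), ENNReal.ofReal C := by
          refine setLIntegral_mono measurable_const fun y hy => ?_
          refine h.osc s x y hs ?_
          rw [← dist_eq_norm, dist_comm]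
          exact (Metric.mem_ball.1 hy).le
      _ = _ := by simp
  · refine Measurable.aemeasurable ?_
    exact (hZ.comp measurable_fst).mul (h2.comp measurable_swap)

lemma ball_vol {d : ℕ} (hd : 1 ≤ d) :
    ∃ v : ℝ, 0 < v ∧ ∀ (x : EuclideanSpace ℝ (Fin d)) (s : ℝ),
      volume (Metric.ball x (Real.exp (-s))) = ENNReal.ofReal (Real.exp (-(d * s)) * v) := by
  have : Nonempty (Fin d) := ⟨⟨0, by omega⟩⟩
  have hfin : volume (Metric.ball (0 : EuclideanSpace ℝ (Fin d)) 1) ≠ ⊤ :=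
    Metric.isBounded_ball.measure_lt_top.ne
  refine ⟨(volume (Metric.ball (0 : EuclideanSpace ℝ (Fin d)) 1)).toReal,
    ENNReal.toReal_pos (Metric.measure_ball_pos _ _ one_pos).ne' hfin, fun x s => ?_⟩
  rw [Measure.addHaar_ball _ _ (Real.exp_pos _).le, ENNReal.ofReal_mul (Real.exp_pos _).le,
    ENNReal.ofReal_toReal hfin, finrank_euclideanSpace, Fintype.card_fin, ← Real.exp_nat_mul]
  ring_nf

/-- If the local mass is at most `K` and the oscillation is good, the field is not too high. -/
lemma field_bound (h : GCore P F g C Y) (v : ℝ) (hv : 0 < v)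
    (hvol : ∀ (x : EuclideanSpace ℝ (Fin d)) (s : ℝ),
      volume (Metric.ball x (Real.exp (-s))) = ENNReal.ofReal (Real.exp (-(d * s)) * v))
    (x : EuclideanSpace ℝ (Fin d)) (s : ℝ) (hs : 0 ≤ s) (ω : Ω) (K L a : ℝ) (hK : 0 < K)
    (hL : 0 < L) (hKa : K * L / v ≤ Real.exp (g * a))
    (h1 : gM g Y (Metric.ball x (Real.exp (-s))) s ω ≤ ENNReal.ofReal K)
    (h2 : gU g Y x s ω ≤ ENNReal.ofReal L * volume (Metric.ball x (Real.exp (-s)))) :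
    Y s x ω - g * s ≤ a := by
  have hYm : Measurable fun y => Y s y ω := by
    have := h.meas s hs
    exact (this.mono (sup_le_sup le_rfl (MeasurableSpace.comap_mono (h.le s))) le_rfl).comp
      measurable_prodMk_right
  have h3 := det_ball volume (Metric.ball x (Real.exp (-s)))
    (Metric.isBounded_ball.measure_lt_top.ne) (fun y => g * (Y s y ω - Y s x ω)) (by fun_prop)
    L hL h2
  have h4 : gM g Y (Metric.ball x (Real.exp (-s))) s ω = gZ g Y s x ω *
      ∫⁻ y in Metric.ball x (Real.exp (-s)),
        ENNReal.ofReal (Real.exp (g * (Y s y ω - Y s x ω))) := by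
    rw [← lintegral_const_mul _ (by fun_prop), gM]
    refine lintegral_congr fun y => ?_
    rw [gZ, gZ, ← ENNReal.ofReal_mul (Real.exp_pos _).le, ← Real.exp_add]
    ring_nf
  rw [h4] at h1
  have h5 := (mul_le_mul_right h3 (gZ g Y s x ω)).trans h1
  rw [hvol, gZ, ← ENNReal.ofReal_mul (by positivity), ← ENNReal.ofReal_mul (by positivity),
    ENNReal.ofReal_le_ofReal_iff hK.le] at h5
  have h6 : Real.exp (g * (Y s x ω - g * s)) ≤ K * L / v := by
    rw [le_div_iff₀ hv]
    have e : g * (Y s x ω - g * s) = (g * Y s x ω - d * s) + (-(d * s)) := by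
      linear_combination (-s) * h.hg
    rw [e, Real.exp_add]
    calc _ = L * (Real.exp (g * Y s x ω - d * s) * (1 / L * (Real.exp (-(d * s)) * v))) := by
          field_simp
      _ ≤ L * K := by gcongr
      _ = K * L := mul_comm _ _
  have h7 := Real.exp_le_exp.1 (h6.trans hKa)
  exact le_of_mul_le_mul_left h7 h.gpos

lemma point_est (h : GCore P F g C Y) (v : ℝ) (hv : 0 < v)
    (hvol : ∀ (x : EuclideanSpace ℝ (Fin d)) (s : ℝ),
      volume (Metric.ball x (Real.exp (-s))) = ENNReal.ofReal (Real.exp (-(d * s)) * v))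
    (x : EuclideanSpace ℝ (Fin d)) (N : ℕ) (hN : 1 ≤ N)
    (r a t K L : ℝ) (hr : 1 ≤ r) (ha : 0 ≤ a) (har : Real.exp (a / r) ≤ 5 / 4)
    (ht : ∀ n < N, r ^ (2 * (n + 1)) ≤ t) (hK : 0 < K)
    (hL : 0 < L) (hKa : K * L / v ≤ Real.exp (g * a)) (G : Set Ω)
    (hG : ∀ ω ∈ G, ∀ n < N, gM g Y (Metric.ball x (Real.exp (-(r ^ (2 * (n + 1))))))
      (r ^ (2 * (n + 1))) ω ≤ ENNReal.ofReal K) :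
    ∫⁻ ω, G.indicator 1 ω * gZ g Y t x ω ∂P ≤
      N * (ENNReal.ofReal C / ENNReal.ofReal L) +
      ENNReal.ofReal (16 * (Real.exp 2 / N + Real.exp 1 * (Real.exp (1 / r) - 1))) := by
  let s : ℕ → ℝ := fun n => r ^ (2 * (n + 1))
  have hs : ∀ n, 0 ≤ s n := fun n => by simp only [s]; positivity
  let c : ℕ → ENNReal := fun n => ENNReal.ofReal L * volume (Metric.ball x (Real.exp (-s n)))
  have hB0 : ∀ n, volume (Metric.ball x (Real.exp (-s n))) ≠ 0 := fun n =>
    (Metric.measure_ball_pos _ _ (Real.exp_pos _)).ne'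
  have hBt : ∀ n, volume (Metric.ball x (Real.exp (-s n))) ≠ ⊤ := fun n =>
    Metric.isBounded_ball.measure_lt_top.ne
  have hL0 : ENNReal.ofReal L ≠ 0 := by simpa using hL
  have hc0 : ∀ n, c n ≠ 0 := fun n => mul_ne_zero hL0 (hB0 n)
  have hct : ∀ n, c n ≠ ⊤ := fun n => ENNReal.mul_ne_top ENNReal.ofReal_ne_top (hBt n)
  set D := {ω | ∀ n < N, Y (r ^ (2 * (n + 1))) x ω - g * r ^ (2 * (n + 1)) ≤ a} with hD
  have hpt : ∀ ω, G.indicator 1 ω * gZ g Y t x ω ≤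
      ∑ n ∈ Finset.range N, (c n)⁻¹ * (gU g Y x (s n) ω * gZ g Y t x ω)
      + D.indicator 1 ω * gZ g Y t x ω := by
    intro ω
    by_cases hω : ω ∈ G
    · rw [Set.indicator_of_mem hω, Pi.one_apply, one_mul]
      by_cases hbad : ∃ n < N, c n < gU g Y x (s n) ω
      · obtain ⟨n, hn, hlt⟩ := hbad
        refine le_trans ?_ (le_add_right (Finset.single_le_sum
          (f := fun n => (c n)⁻¹ * (gU g Y x (s n) ω * gZ g Y t x ω))
          (fun i _ => zero_le) (Finset.mem_range.2 hn)))
        calc gZ g Y t x ω = (c n)⁻¹ * (c n * gZ g Y t x ω) := by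
              rw [← mul_assoc, ENNReal.inv_mul_cancel (hc0 n) (hct n), one_mul]
          _ ≤ _ := by gcongr
      · push Not at hbad
        have hωD : ω ∈ D := fun n hn =>
          field_bound h v hv hvol x (s n) (hs n) ω K L a hK hL hKa (hG ω hω n hn) (hbad n hn)
        rw [Set.indicator_of_mem hωD, Pi.one_apply, one_mul]
        exact le_add_left le_rfl
    · rw [Set.indicator_of_notMem hω, zero_mul]
      exact zero_le
  have hZ : Measurable (fun ω => gZ g Y t x ω) := by
    have ht0 : 0 ≤ t := (hs 0).trans (ht 0 (by omega))
    have h1 : Measurable (fun p : EuclideanSpace ℝ (Fin d) × Ω => gZ g Y t p.1 p.2) :=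
      (gZ_meas h t ht0).mono (sup_le_sup le_rfl (MeasurableSpace.comap_mono (h.le t))) le_rfl
    exact h1.comp measurable_prodMk_left
  have hUZ : ∀ n, Measurable (fun ω => gU g Y x (s n) ω * gZ g Y t x ω) := fun n =>
    ((gU_meas h x (s n) (hs n)).mono (h.le _) le_rfl).mul hZ
  refine (lintegral_mono hpt).trans ?_
  rw [lintegral_add_left (by fun_prop)]
  refine add_le_add ?_ (gauss_est h x N hN r a t hr ha har ht)
  rw [lintegral_finsetSum _ (fun n _ => (hUZ n).const_mul _)]
  calc _ ≤ ∑ n ∈ Finset.range N, ENNReal.ofReal C / ENNReal.ofReal L := by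
        refine Finset.sum_le_sum fun n hn => ?_
        rw [lintegral_const_mul _ (hUZ n)]
        calc _ ≤ (c n)⁻¹ * (ENNReal.ofReal C * volume (Metric.ball x (Real.exp (-s n)))) := by
              gcongr
              exact gU_mean h x (s n) t (hs n) (ht n (Finset.mem_range.1 hn))
          _ = _ := by
              simp only [c]
              rw [ENNReal.mul_inv (Or.inl hL0) (Or.inl ENNReal.ofReal_ne_top), mul_mul_mul_comm,
                ENNReal.inv_mul_cancel (hB0 n) (hBt n), mul_one, mul_comm, div_eq_mul_inv]
    _ = _ := by simp

lemma params (W C v V' ε g : ℝ) (hW : 0 ≤ W) (hv : 0 < v) (hV' : 0 ≤ V') (hε : 0 < ε)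
    (hg : 0 < g) : ∃ (K L a r : ℝ) (N : ℕ), 0 < K ∧ 0 < L ∧ 0 ≤ a ∧ 1 ≤ r ∧ 1 ≤ N ∧
      V' ≤ K * ε ∧ K * L / v ≤ Real.exp (g * a) ∧ Real.exp (a / r) ≤ 5 / 4 ∧
      (N * (|C| / L) + 16 * (Real.exp 2 / N + Real.exp 1 * (Real.exp (1 / r) - 1))) * W ≤ ε := by
  obtain ⟨N, hN⟩ := exists_nat_gt (48 * W * Real.exp 2 / ε)
  have hNpos : (0:ℝ) < N := lt_of_le_of_lt (by positivity) hN
  set K := V' / ε + 1 with hKdef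
  have hK : 0 < K := by positivity
  set L := 3 * W * N * |C| / ε + 1 with hLdef
  have hL : 0 < L := by positivity
  set a := max 0 (Real.log (K * L / v) / g) with hadef
  have hlim : ∀ c : ℝ, Tendsto (fun r : ℝ => Real.exp (c / r)) atTop (nhds 1) := by
    intro c
    have h1 : Tendsto (fun r : ℝ => c / r) atTop (nhds 0) := tendsto_const_nhds.div_atTop tendsto_id
    have h2 := (Real.continuous_exp.tendsto 0).comp h1
    rw [Real.exp_zero] at h2
    exact h2
  have e1 : ∀ᶠ r : ℝ in atTop, Real.exp (a / r) < 5 / 4 :=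
    (hlim a).eventually_lt_const (by norm_num)
  have e2 : ∀ᶠ r : ℝ in atTop, 16 * (Real.exp 1 * (Real.exp (1 / r) - 1)) * W < ε / 3 := by
    have h1 : Tendsto (fun r : ℝ => 16 * (Real.exp 1 * (Real.exp (1 / r) - 1)) * W) atTop
        (nhds (16 * (Real.exp 1 * (1 - 1)) * W)) :=
      ((((hlim 1).sub_const 1).const_mul _).const_mul _).mul_const _
    exact h1.eventually_lt_const (by simp; positivity)
  obtain ⟨r, h1, h2, hr⟩ := (e1.and (e2.and (eventually_ge_atTop 1))).exists
  refine ⟨K, L, a, r, N, hK, hL, le_max_left _ _, hr, by exact_mod_cast hNpos, ?_, ?_, h1.le, ?_⟩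
  · rw [hKdef, add_mul, div_mul_cancel₀ _ hε.ne']
    linarith
  · have h3 : Real.log (K * L / v) / g ≤ a := le_max_right _ _
    rw [div_le_iff₀ hg] at h3
    rw [← Real.log_le_iff_le_exp (by positivity)]
    linarith
  · have h3 : N * (|C| / L) * W ≤ ε / 3 := by
      have e : N * (|C| / L) * W = N * |C| * W / L := by ring
      rw [e, div_le_iff₀ hL, hLdef]
      have e' : ε / 3 * (3 * W * N * |C| / ε + 1) = W * N * |C| + ε / 3 := by
        field_simp
      rw [e']
      nlinarith
    have h4 : 16 * (Real.exp 2 / N) * W ≤ ε / 3 := by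
      have e : 16 * (Real.exp 2 / N) * W = 16 * W * Real.exp 2 / N := by ring
      rw [e, div_le_iff₀ hNpos]
      rw [div_lt_iff₀ hε] at hN
      linarith
    linarith

lemma small_mass (h : GCore P F g C Y) (hd : 1 ≤ d) (A : Set (EuclideanSpace ℝ (Fin d)))
    (hAm : MeasurableSet A) (hA : Bornology.IsBounded A) (ε : ℝ) (hε : 0 < ε) :
    ∃ t, 0 ≤ t ∧ ∃ H : Set Ω, MeasurableSet[F t] H ∧ P Hᶜ ≤ ENNReal.ofReal ε ∧
      ∫⁻ ω in H, gM g Y A t ω ∂P ≤ ENNReal.ofReal ε := by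
  obtain ⟨R, hR⟩ := hA.subset_ball (0 : EuclideanSpace ℝ (Fin d))
  obtain ⟨v, hv, hvol⟩ := ball_vol hd
  set A' := Metric.ball (0 : EuclideanSpace ℝ (Fin d)) (R + 1) with hA'
  have hAfin : volume A ≠ ⊤ := hA.measure_lt_top.ne
  have hA'fin : volume A' ≠ ⊤ := Metric.isBounded_ball.measure_lt_top.ne
  obtain ⟨K, L, a, r, N, hK, hL, ha, hr, hN, hVK, hKa, har, hfin⟩ :=
    params (volume A).toReal C v (volume A').toReal ε g ENNReal.toReal_nonneg hv
      ENNReal.toReal_nonneg hε h.gpos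
  let s : ℕ → ℝ := fun n => r ^ (2 * (n + 1))
  have hs : ∀ n, 0 ≤ s n := fun n => by simp only [s]; positivity
  have hsm : Monotone s := fun i j hij => pow_le_pow_right₀ hr (by omega)
  let G : Set Ω := ⋂ n, ⋂ (_ : n < N), {ω | gM g Y A' (s n) ω < ENNReal.ofReal K}
  have hGF : MeasurableSet[F (s N)] G := by
    refine MeasurableSet.iInter fun n => MeasurableSet.iInter fun hn => ?_
    have h1 := gM_meas h A' (s n) (hs n)
    exact h.mono _ _ (hsm hn.le) _ (h1 measurableSet_Iio)
  have hGm : MeasurableSet G := h.le _ _ hGF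
  have hKp : ENNReal.ofReal K ≠ 0 := by simpa using hK
  refine ⟨s N, hs N, G, hGF, ?_, ?_⟩
  · have h1 := maximal_fin h A' (ENNReal.ofReal K) N s hsm (hs 0) Set.univ MeasurableSet.univ
    rw [Measure.restrict_univ, gM_mean h A' _ (hs 0), Set.univ_inter] at h1
    have h2 : Gᶜ ⊆ {ω | ∃ i ≤ N, ENNReal.ofReal K ≤ gM g Y A' (s i) ω} := by
      intro ω hω
      simp only [G, Set.mem_compl_iff, Set.mem_iInter, Set.mem_ofPred_eq, not_forall, not_lt] at hω
      obtain ⟨i, hi, hl⟩ := hω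
      exact ⟨i, hi.le, hl⟩
    have h3 : ENNReal.ofReal K * P Gᶜ ≤ ENNReal.ofReal K * ENNReal.ofReal ε := by
      refine (mul_le_mul_right (measure_mono h2) _).trans (h1.trans ?_)
      rw [← ENNReal.ofReal_mul hK.le, ← ENNReal.ofReal_toReal hA'fin]
      exact ENNReal.ofReal_le_ofReal hVK
    exact (ENNReal.mul_le_mul_iff_right hKp ENNReal.ofReal_ne_top).1 h3
  · have e : ∫⁻ ω in G, gM g Y A (s N) ω ∂P = ∫⁻ ω, G.indicator 1 ω * gM g Y A (s N) ω ∂P := by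
      rw [← lintegral_indicator hGm]
      refine lintegral_congr fun ω => ?_
      by_cases hω : ω ∈ G <;> simp [hω]
    rw [e, gM_swap h A (s N) (hs N) _ (meas_ind _ hGm)]
    have hb : ∀ x ∈ A, ∫⁻ ω, G.indicator 1 ω * gZ g Y (s N) x ω ∂P ≤
        N * (ENNReal.ofReal C / ENNReal.ofReal L) +
        ENNReal.ofReal (16 * (Real.exp 2 / N + Real.exp 1 * (Real.exp (1 / r) - 1))) := by
      intro x hx
      refine point_est h v hv hvol x N hN r a (s N) K L hr ha har (fun n hn => hsm hn.le) hK hL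
        hKa G ?_
      intro ω hω n hn
      have h1 : gM g Y A' (s n) ω < ENNReal.ofReal K := Set.mem_iInter₂.1 hω n hn
      refine le_trans ?_ h1.le
      refine lintegral_mono_set ?_
      have hx' := Metric.mem_ball.1 (hR hx)
      refine Metric.ball_subset_ball' ?_
      have : Real.exp (-(r ^ (2 * (n + 1)))) ≤ 1 := by
        rw [Real.exp_le_one_iff]
        have := hs n
        simp only [s] at this
        linarith
      linarith
    calc _ ≤ ∫⁻ x in A, (N * (ENNReal.ofReal C / ENNReal.ofReal L) +
        ENNReal.ofReal (16 * (Real.exp 2 / N + Real.exp 1 * (Real.exp (1 / r) - 1)))) :=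
          setLIntegral_mono measurable_const hb
      _ = (N * (ENNReal.ofReal C / ENNReal.ofReal L) +
        ENNReal.ofReal (16 * (Real.exp 2 / N + Real.exp 1 * (Real.exp (1 / r) - 1))))
          * volume A := by rw [lintegral_const, Measure.restrict_apply_univ]
      _ ≤ ENNReal.ofReal ((N * (|C| / L) +
        16 * (Real.exp 2 / N + Real.exp 1 * (Real.exp (1 / r) - 1))) * (volume A).toReal) := by
          have hexp1 : 0 ≤ Real.exp (1 / r) - 1 := by
            have : 0 ≤ 1 / r := by positivity
            linarith [Real.one_le_exp this]
          have hQ : 0 ≤ 16 * (Real.exp 2 / N + Real.exp 1 * (Real.exp (1 / r) - 1)) := by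
            positivity
          generalize 16 * (Real.exp 2 / (N : ℝ) + Real.exp 1 * (Real.exp (1 / r) - 1)) = Q at hQ ⊢
          rw [ENNReal.ofReal_mul (by positivity : 0 ≤ N * (|C| / L) + Q),
            ENNReal.ofReal_toReal hAfin, ENNReal.ofReal_add (by positivity) hQ,
            ENNReal.ofReal_mul (by positivity), ENNReal.ofReal_natCast,
            ENNReal.ofReal_div_of_pos hL]
          gcongr
          exact le_abs_self C
      _ ≤ _ := ENNReal.ofReal_le_ofReal hfin

lemma no_exceed (h : GCore P F g C Y) (hd : 1 ≤ d) (A : Set (EuclideanSpace ℝ (Fin d)))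
    (hAm : MeasurableSet A) (hA : Bornology.IsBounded A) (l : ℝ) (hl : 0 < l) :
    ∀ᵐ ω ∂P, ∃ T, ∀ t, T ≤ t → gM g Y A t ω ≤ ENNReal.ofReal l := by
  rw [ae_iff]
  set S := {ω | ¬ ∃ T, ∀ t, T ≤ t → gM g Y A t ω ≤ ENNReal.ofReal l} with hS
  have hlp : ENNReal.ofReal l ≠ 0 := by simpa using hl
  have key : ∀ ε : ℝ, 0 < ε → P S ≤ ENNReal.ofReal (ε * (1 + 1 / l)) := by
    intro ε hε
    obtain ⟨T, hT, H, hH, h1, h2⟩ := small_mass h hd A hAm hA ε hε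
    have h3 := (maximal_cont h A (ENNReal.ofReal l) T hT H hH).trans h2
    have hsub : S ⊆ Hᶜ ∪ (H ∩ {ω | ∃ t, T ≤ t ∧ ENNReal.ofReal l < gM g Y A t ω}) := by
      intro ω hω
      by_cases hωH : ω ∈ H
      · right
        simp only [hS, Set.mem_ofPred_eq] at hω
        push Not at hω
        exact ⟨hωH, hω T⟩
      · exact Or.inl hωH
    have h4 : P (H ∩ {ω | ∃ t, T ≤ t ∧ ENNReal.ofReal l < gM g Y A t ω})
        ≤ ENNReal.ofReal (ε * (1 / l)) := by
      have e : ENNReal.ofReal ε = ENNReal.ofReal l * ENNReal.ofReal (ε * (1 / l)) := by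
        rw [← ENNReal.ofReal_mul hl.le]
        congr 1
        field_simp
      rw [e] at h3
      exact (ENNReal.mul_le_mul_iff_right hlp ENNReal.ofReal_ne_top).1 h3
    calc P S ≤ P Hᶜ + _ := (measure_mono hsub).trans (measure_union_le _ _)
      _ ≤ ENNReal.ofReal ε + ENNReal.ofReal (ε * (1 / l)) := add_le_add h1 h4
      _ = _ := by
        rw [← ENNReal.ofReal_add hε.le (by positivity)]
        ring_nf
  refine le_antisymm ?_ zero_le
  have hlim : Tendsto (fun n : ℕ => ENNReal.ofReal ((1 / ((n:ℝ) + 1)) * (1 + 1 / l))) atTop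
      (nhds 0) := by
    have := (tendsto_one_div_add_atTop_nhds_zero_nat (𝕜 := ℝ)).mul_const (1 + 1 / l)
    simpa using ENNReal.tendsto_ofReal this
  exact ge_of_tendsto' hlim fun n => key _ (by positivity)

end core

theorem critical_gmc_vanishes
    {d : ℕ} (hd : 1 ≤ d)
    {Ω : Type*} [m0 : MeasurableSpace Ω] (P : Measure Ω) [IsProbabilityMeasure P]
    (k : EuclideanSpace ℝ (Fin d) → ℝ)
    (hk1 : ContDiff ℝ 1 k) (hk0 : k 0 = 1) (hkb : ∀ z, |k z| ≤ 1)
    (hksupp : HasCompactSupport k)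
    (hkpd : ∀ (n : ℕ) (z : Fin n → EuclideanSpace ℝ (Fin d)) (c : Fin n → ℝ),
      0 ≤ ∑ i, ∑ j, c i * c j * k (z i - z j))
    (X : ℝ → EuclideanSpace ℝ (Fin d) → Ω → ℝ)
    (hXmeas : ∀ t x, Measurable (X t x))
    (hXgauss : ∀ (n : ℕ) (c : Fin n → ℝ) (t : Fin n → ℝ)
        (x : Fin n → EuclideanSpace ℝ (Fin d)),
      ∃ v : NNReal,
        Measure.map (fun ω => ∑ i, c i * X (t i) (x i) ω) P = gaussianReal 0 v)
    (hXcent : ∀ t x, ∫ ω, X t x ω ∂P = 0)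
    (hXcov : ∀ t, 0 ≤ t → ∀ x y : EuclideanSpace ℝ (Fin d),
      ∫ ω, X t x ω * X t y ω ∂P = ∫ u in Set.Icc (1:ℝ) (Real.exp t), k (u • (x - y)) / u)
    (hXcont : ∀ᵐ ω ∂P, Continuous fun p : ℝ × EuclideanSpace ℝ (Fin d) => X p.1 p.2 ω)
    (hXindep : ∀ s t : ℝ, 0 ≤ s → s < t →
      Indep (⨆ x : EuclideanSpace ℝ (Fin d),
          MeasurableSpace.comap (fun ω => X t x ω - X s x ω) inferInstance)
        (⨆ u ∈ Set.Icc (0:ℝ) s, ⨆ x : EuclideanSpace ℝ (Fin d),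
          MeasurableSpace.comap (X u x) inferInstance) P)
    :
    ∀ A : Set (EuclideanSpace ℝ (Fin d)), MeasurableSet A → Bornology.IsBounded A →
    ∀ᵐ ω ∂P, Tendsto (fun t : ℝ =>
        ∫ x in A, Real.exp (Real.sqrt (2 * (d:ℝ)) * X t x ω - (d:ℝ) * t))
      atTop (nhds 0) := by
  intro A hAm hA
  obtain ⟨F, C, Y, h, hYX⟩ := core_exists hd P k hk1 hk0 hksupp X hXmeas hXgauss hXcent hXcov
    hXcont hXindep
  have hall : ∀ᵐ ω ∂P, ∀ n : ℕ, ∃ T, ∀ t, T ≤ t →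
      gM (Real.sqrt (2 * (d:ℝ))) Y A t ω ≤ ENNReal.ofReal (1 / ((n:ℝ) + 1)) :=
    ae_all_iff.2 fun n => no_exceed h hd A hAm hA _ (by positivity)
  filter_upwards [hall, hYX] with ω h1 h2
  rw [Metric.tendsto_atTop]
  intro ε hε
  obtain ⟨n, hn⟩ := exists_nat_one_div_lt hε
  obtain ⟨T, hT⟩ := h1 n
  refine ⟨T, fun t ht => ?_⟩
  have h3 := hT t ht
  rw [dist_zero_right]
  refine lt_of_le_of_lt (norm_integral_le_lintegral_norm _) (lt_of_le_of_lt ?_ hn)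
  refine ENNReal.toReal_le_of_le_ofReal (by positivity) (le_trans (le_of_eq ?_) h3)
  refine lintegral_congr fun x => ?_
  rw [Real.norm_of_nonneg (Real.exp_pos _).le, gZ, h2]
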